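/- Let n ≥ 2 be an integer, r > 0, and λ > 0. Suppose u : [0,r] → ℝ is twice continuously differentiable on [0,r), continuous on [0,r], satisfies u(t) > 0 for t ∈ [0,r), u'(0) = 0, u(r) = 0, and u''(t) + ((n−1)/tanh(t))·u'(t) + λ·u(t) = 0 for all t ∈ (0,r). Then the function φ = u'/u satisfies φ'(t) < 0 for all t ∈ [0,r); in particular, log u is strictly concave on [0,r). -/

import Mathlib

/-!
The logarithmic derivative `φ = u' / u` solves the Riccati equation `φ' = -h φ - λ - φ²` with
`h t = (n - 1) / tanh t`. As `t → 0` we have `t * h t → n - 1` and `φ t / t → φ' 0`, so the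
equation becomes `φ' 0 = -(n - 1) φ' 0 - λ` in the limit, whence `φ' 0 = -λ / n < 0`. Both `φ` and
`φ'` are then negative just to the right of `0`, and neither can vanish afterwards: at a zero of `φ`
one has `φ' = -λ < 0`, and at a zero of `φ'` one has `φ'' = -h' φ < 0` because `h` decreases and
`φ < 0`, while a function that is negative up to its first zero cannot have negative derivative
there.
-/

open Set Filter Topology

theorem neg_of_eventually_neg_of_deriv_neg_of_eq_zero {f : ℝ → ℝ} {a b : ℝ}
    (hf : ∀ t ∈ Ioo a b, DifferentiableAt ℝ f t) (hstart : ∀ᶠ t in 𝓝[>] a, f t < 0)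
    (hzero : ∀ t ∈ Ioo a b, f t = 0 → deriv f t < 0) : ∀ t ∈ Ioo a b, f t < 0 := by
  have hle : ∀ t ∈ Ioo a b, f t ≤ 0 := by
    intro t ht
    obtain ⟨s, hs, has, hst⟩ := (hstart.and (Ioo_mem_nhdsGT ht.1)).exists
    have hsub : Icc s t ⊆ Ioo a b := fun x hx => ⟨has.trans_le hx.1, hx.2.trans_lt ht.2⟩
    exact image_le_of_deriv_right_lt_deriv_boundary
      (fun x hx => (hf x (hsub hx)).continuousAt.continuousWithinAt)
      (fun x hx => (hf x (hsub (Ico_subset_Icc_self hx))).hasDerivAt.hasDerivWithinAt)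
      hs.le (fun x => hasDerivAt_const x 0)
      (fun x hx => hzero x (hsub (Ico_subset_Icc_self hx))) ⟨hst.le, le_rfl⟩
  intro t ht
  refine (hle t ht).lt_of_ne fun hft => ?_
  have hsign : ∀ᶠ x in 𝓝[<] t, SignType.sign (f x) = SignType.sign (t - x) :=
    nhdsWithin_le_nhds (eventually_nhdsWithin_sign_eq_of_deriv_neg (hzero t ht hft) hft)
  obtain ⟨x, hx, hax, hxt⟩ := (hsign.and (Ioo_mem_nhdsLT ht.1)).exists
  rw [sign_pos (sub_pos.2 hxt), sign_eq_one_iff] at hx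
  exact hx.not_ge (hle x ⟨hax, hxt.trans ht.2⟩)

theorem eventually_neg_nhdsGT_of_deriv_neg {f : ℝ → ℝ} {a : ℝ} (hf : deriv f a < 0)
    (ha : f a = 0) : ∀ᶠ t in 𝓝[>] a, f t < 0 := by
  filter_upwards [nhdsWithin_le_nhds (eventually_nhdsWithin_sign_eq_of_deriv_neg hf ha),
    self_mem_nhdsWithin] with t ht hat
  rwa [sign_neg (sub_neg.2 hat), sign_eq_neg_one_iff] at ht

theorem nonneg_of_antitoneOn_of_tendsto_id_mul {h : ℝ → ℝ} {m r : ℝ} (hr : 0 < r)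
    (hh : AntitoneOn h (Ioo 0 r)) (hlim : Tendsto (fun t => t * h t) (𝓝[>] 0) (𝓝 m)) :
    0 ≤ m := by
  have hmid : r / 2 ∈ Ioo 0 r := ⟨half_pos hr, half_lt_self hr⟩
  have hbound : Tendsto (fun t => t * h (r / 2)) (𝓝[>] 0) (𝓝 0) :=
    ((continuous_mul_const (h (r / 2))).tendsto' 0 0 (zero_mul _)).mono_left
      nhdsWithin_le_nhds
  refine le_of_tendsto_of_tendsto hbound hlim ?_
  filter_upwards [Ioo_mem_nhdsGT hmid.1] with t ht
  exact mul_le_mul_of_nonneg_left (hh ⟨ht.1, ht.2.trans hmid.2⟩ hmid ht.2.le) ht.1.le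

theorem strictConcaveOn_log_comp_of_deriv_logDeriv_neg {s : Set ℝ} {u : ℝ → ℝ} (hs : Convex ℝ s)
    (hu : ContinuousOn u s) (hne : ∀ t ∈ s, u t ≠ 0)
    (hd : ∀ t ∈ interior s, DifferentiableAt ℝ u t)
    (hlog : ∀ t ∈ interior s, deriv (logDeriv u) t < 0) :
    StrictConcaveOn ℝ s (fun t => Real.log (u t)) := by
  refine strictConcaveOn_of_deriv2_neg hs (hu.log hne) fun t ht => ?_
  have heq : deriv (fun x => Real.log (u x)) =ᶠ[𝓝 t] logDeriv u := by
    filter_upwards [isOpen_interior.mem_nhds ht] with x hx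
    exact Real.deriv_log_comp_eq_logDeriv (hd x hx) (hne x (interior_subset hx))
  simpa only [Function.iterate_succ, Function.iterate_zero, Function.comp_apply, id_eq,
    heq.deriv_eq] using hlog t ht

/-- `φ` solves the Riccati equation `φ' = -h φ - λ - φ²` on `(0, r)` with `φ 0 = 0`. This is the
equation of the logarithmic derivative of a solution of `u'' + h u' + λ u = 0`; in a rotationally
symmetric space, `h t` is the mean curvature of the geodesic sphere of radius `t`. Differentiability
at `0` is two-sided, so that `deriv φ 0` is meaningful. -/
structure IsRadialRiccatiSolution (h : ℝ → ℝ) (lam r : ℝ) (φ : ℝ → ℝ) : Prop where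
  apply_zero : φ 0 = 0
  differentiableAt : ∀ t ∈ Ico 0 r, DifferentiableAt ℝ φ t
  deriv_eq : ∀ t ∈ Ioo 0 r, deriv φ t = -h t * φ t - lam - φ t ^ 2

theorem isRadialRiccatiSolution_logDeriv {h u : ℝ → ℝ} {lam r : ℝ}
    (hd : ∀ t ∈ Ico 0 r, DifferentiableAt ℝ u t)
    (hd' : ∀ t ∈ Ico 0 r, DifferentiableAt ℝ (deriv u) t)
    (hne : ∀ t ∈ Ico 0 r, u t ≠ 0) (h0 : deriv u 0 = 0)
    (hode : ∀ t ∈ Ioo 0 r, deriv (deriv u) t + h t * deriv u t + lam * u t = 0) :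
    IsRadialRiccatiSolution h lam r (logDeriv u) where
  apply_zero := by rw [logDeriv_apply, h0, zero_div]
  differentiableAt t ht := (hd' t ht).div (hd t ht) (hne t ht)
  deriv_eq t ht := by
    have ht' : t ∈ Ico 0 r := Ioo_subset_Ico_self ht
    have hut : u t ≠ 0 := hne t ht'
    have hquot : deriv (logDeriv u) t =
        (deriv (deriv u) t * u t - deriv u t * deriv u t) / u t ^ 2 :=
      deriv_div (hd' t ht') (hd t ht') hut
    rw [hquot, logDeriv_apply]
    field_simp
    linear_combination u t * hode t ht

namespace IsRadialRiccatiSolution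

variable {h φ : ℝ → ℝ} {lam m r : ℝ}

theorem tendsto_deriv (hφ : IsRadialRiccatiSolution h lam r φ) (hr : 0 < r)
    (hlim : Tendsto (fun t => t * h t) (𝓝[>] 0) (𝓝 m)) :
    Tendsto (deriv φ) (𝓝[>] 0) (𝓝 (-(m * deriv φ 0) - lam)) := by
  have hφ' : DifferentiableAt ℝ φ 0 := hφ.differentiableAt 0 ⟨le_rfl, hr⟩
  have hcont : Tendsto φ (𝓝[>] 0) (𝓝 0) := by
    simpa only [hφ.apply_zero] using hφ'.continuousAt.tendsto.mono_left nhdsWithin_le_nhds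
  have hslope : Tendsto (fun t => t⁻¹ * φ t) (𝓝[>] 0) (𝓝 (deriv φ 0)) := by
    simpa only [zero_add, hφ.apply_zero, sub_zero, smul_eq_mul] using
      hφ'.hasDerivAt.tendsto_slope_zero_right
  have hrhs : Tendsto (fun t => -(t * h t * (t⁻¹ * φ t)) - lam - φ t ^ 2) (𝓝[>] 0)
      (𝓝 (-(m * deriv φ 0) - lam)) := by
    simpa using ((hlim.mul hslope).neg.sub_const lam).sub (hcont.pow 2)
  refine hrhs.congr' ?_
  filter_upwards [Ioo_mem_nhdsGT hr] with t ht
  have ht0 : t ≠ 0 := ht.1.ne'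
  rw [hφ.deriv_eq t ht]
  field_simp

theorem add_one_mul_deriv_zero (hφ : IsRadialRiccatiSolution h lam r φ) (hr : 0 < r)
    (hlim : Tendsto (fun t => t * h t) (𝓝[>] 0) (𝓝 m)) : (m + 1) * deriv φ 0 = -lam := by
  have hφ' : DifferentiableAt ℝ φ 0 := hφ.differentiableAt 0 ⟨le_rfl, hr⟩
  have hext : HasDerivWithinAt φ (-(m * deriv φ 0) - lam) (Ici 0) 0 :=
    hasDerivWithinAt_Ici_of_tendsto_deriv
      (fun t ht => (hφ.differentiableAt t (Ioo_subset_Ico_self ht)).differentiableWithinAt)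
      hφ'.continuousAt.continuousWithinAt (Ioo_mem_nhdsGT hr) (hφ.tendsto_deriv hr hlim)
  have hunique : -(m * deriv φ 0) - lam = deriv φ 0 :=
    (uniqueDiffOn_Ici (0 : ℝ) 0 self_mem_Ici).eq_deriv _ hext hφ'.hasDerivAt.hasDerivWithinAt
  linarith

theorem tendsto_deriv_nhds_deriv_zero (hφ : IsRadialRiccatiSolution h lam r φ) (hr : 0 < r)
    (hlim : Tendsto (fun t => t * h t) (𝓝[>] 0) (𝓝 m)) :
    Tendsto (deriv φ) (𝓝[>] 0) (𝓝 (deriv φ 0)) := by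
  have hlimit : -(m * deriv φ 0) - lam = deriv φ 0 := by
    linarith [hφ.add_one_mul_deriv_zero hr hlim]
  simpa only [hlimit] using hφ.tendsto_deriv hr hlim

theorem deriv_zero_lt_zero (hφ : IsRadialRiccatiSolution h lam r φ) (hr : 0 < r) (hlam : 0 < lam)
    (hm : -1 < m) (hlim : Tendsto (fun t => t * h t) (𝓝[>] 0) (𝓝 m)) : deriv φ 0 < 0 := by
  have hprod : (m + 1) * deriv φ 0 < 0 := by linarith [hφ.add_one_mul_deriv_zero hr hlim]
  exact neg_of_mul_neg_right hprod (by linarith)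

theorem lt_zero (hφ : IsRadialRiccatiSolution h lam r φ) (hlam : 0 < lam) (h0 : deriv φ 0 < 0) :
    ∀ t ∈ Ioo 0 r, φ t < 0 := by
  refine neg_of_eventually_neg_of_deriv_neg_of_eq_zero
    (fun t ht => hφ.differentiableAt t (Ioo_subset_Ico_self ht))
    (eventually_neg_nhdsGT_of_deriv_neg h0 hφ.apply_zero) fun t ht hzero => ?_
  rw [hφ.deriv_eq t ht, hzero]
  linarith

theorem hasDerivAt_deriv (hφ : IsRadialRiccatiSolution h lam r φ) {t : ℝ} (ht : t ∈ Ioo 0 r)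
    (hh : DifferentiableAt ℝ h t) :
    HasDerivAt (deriv φ) (-deriv h t * φ t - (h t + 2 * φ t) * deriv φ t) t := by
  have hφt : HasDerivAt φ (deriv φ t) t :=
    (hφ.differentiableAt t (Ioo_subset_Ico_self ht)).hasDerivAt
  have hrhs : HasDerivAt (fun s => -h s * φ s - lam - φ s ^ 2)
      (-deriv h t * φ t - (h t + 2 * φ t) * deriv φ t) t :=
    (((hh.hasDerivAt.fun_neg.fun_mul hφt).sub_const lam).fun_sub (hφt.fun_pow 2)).congr_deriv
      (by ring)
  exact hrhs.congr_of_eventuallyEq (eventually_of_mem (isOpen_Ioo.mem_nhds ht) hφ.deriv_eq)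

theorem deriv_lt_zero (hφ : IsRadialRiccatiSolution h lam r φ) (hlam : 0 < lam)
    (hh : ∀ t ∈ Ioo 0 r, deriv h t < 0)
    (hlim : Tendsto (fun t => t * h t) (𝓝[>] 0) (𝓝 m)) : ∀ t ∈ Ico 0 r, deriv φ t < 0 := by
  intro t ht
  have hr : 0 < r := ht.1.trans_lt ht.2
  have hdiff : ∀ s ∈ Ioo 0 r, DifferentiableAt ℝ h s := fun s hs =>
    differentiableAt_of_deriv_ne_zero (hh s hs).ne
  have hanti : StrictAntiOn h (Ioo 0 r) :=
    strictAntiOn_of_deriv_neg (convex_Ioo 0 r)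
      (fun s hs => (hdiff s hs).continuousAt.continuousWithinAt)
      (by simpa only [interior_Ioo] using hh)
  have hm : 0 ≤ m := nonneg_of_antitoneOn_of_tendsto_id_mul hr hanti.antitoneOn hlim
  have h0 : deriv φ 0 < 0 := hφ.deriv_zero_lt_zero hr hlam (by linarith) hlim
  rcases ht.1.eq_or_lt with rfl | htpos
  · exact h0
  refine neg_of_eventually_neg_of_deriv_neg_of_eq_zero
    (fun s hs => (hφ.hasDerivAt_deriv hs (hdiff s hs)).differentiableAt)
    ((hφ.tendsto_deriv_nhds_deriv_zero hr hlim).eventually_lt_const h0)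
    (fun s hs hzero => ?_) t ⟨htpos, ht.2⟩
  rw [(hφ.hasDerivAt_deriv hs (hdiff s hs)).deriv, hzero]
  linarith [mul_pos_of_neg_of_neg (hh s hs) (hφ.lt_zero hlam h0 s hs)]

end IsRadialRiccatiSolution

theorem hasDerivAt_const_div_tanh (c : ℝ) {t : ℝ} (ht : t ≠ 0) :
    HasDerivAt (fun s => c / Real.tanh s) (-(c / Real.sinh t ^ 2)) t := by
  have hsinh : Real.sinh t ≠ 0 := Real.sinh_ne_zero.2 ht
  have hquot : HasDerivAt (fun s => c * Real.cosh s / Real.sinh s) (-(c / Real.sinh t ^ 2)) t := by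
    refine (((Real.hasDerivAt_cosh t).const_mul c).fun_div
      (Real.hasDerivAt_sinh t) hsinh).congr_deriv ?_
    field_simp
    linear_combination -c * Real.cosh_sq t
  simpa only [Real.tanh_eq_sinh_div_cosh, div_div_eq_mul_div] using hquot

theorem deriv_const_div_tanh_neg {c t : ℝ} (hc : 0 < c) (ht : t ≠ 0) :
    deriv (fun s => c / Real.tanh s) t < 0 := by
  rw [(hasDerivAt_const_div_tanh c ht).deriv, neg_lt_zero]
  exact div_pos hc (even_two.pow_pos (Real.sinh_ne_zero.2 ht))

theorem tendsto_id_mul_const_div_tanh (c : ℝ) :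
    Tendsto (fun t => t * (c / Real.tanh t)) (𝓝[≠] 0) (𝓝 c) := by
  have hsinh : Tendsto (fun t => t⁻¹ * Real.sinh t) (𝓝[≠] 0) (𝓝 1) := by
    simpa using (Real.hasDerivAt_sinh 0).tendsto_slope_zero
  have hcosh : Tendsto Real.cosh (𝓝[≠] 0) (𝓝 1) :=
    (Real.continuous_cosh.tendsto' 0 1 Real.cosh_zero).mono_left nhdsWithin_le_nhds
  have hquot : Tendsto (fun t => c * Real.cosh t / (t⁻¹ * Real.sinh t)) (𝓝[≠] 0)
      (𝓝 (c * 1 / 1)) := (hcosh.const_mul c).div hsinh one_ne_zero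
  rw [mul_one, div_one] at hquot
  refine hquot.congr fun t => ?_
  rw [Real.tanh_eq_sinh_div_cosh]
  field_simp

theorem radial_eigenfunction_log_concave_general {h u : ℝ → ℝ} {lam m r : ℝ} (hlam : 0 < lam)
    (hh : ∀ t ∈ Ioo 0 r, deriv h t < 0)
    (hlim : Tendsto (fun t => t * h t) (𝓝[>] 0) (𝓝 m))
    (hd : ∀ t ∈ Ico 0 r, DifferentiableAt ℝ u t)
    (hd' : ∀ t ∈ Ico 0 r, DifferentiableAt ℝ (deriv u) t)
    (hpos : ∀ t ∈ Ico 0 r, 0 < u t) (h0 : deriv u 0 = 0)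
    (hode : ∀ t ∈ Ioo 0 r, deriv (deriv u) t + h t * deriv u t + lam * u t = 0) :
    (∀ t ∈ Ico 0 r, deriv (fun s => deriv u s / u s) t < 0) ∧
      StrictConcaveOn ℝ (Ico 0 r) (fun t => Real.log (u t)) := by
  have hne : ∀ t ∈ Ico 0 r, u t ≠ 0 := fun t ht => (hpos t ht).ne'
  have hneg : ∀ t ∈ Ico 0 r, deriv (logDeriv u) t < 0 :=
    (isRadialRiccatiSolution_logDeriv hd hd' hne h0 hode).deriv_lt_zero hlam hh hlim
  exact ⟨hneg, strictConcaveOn_log_comp_of_deriv_logDeriv_neg (convex_Ico 0 r)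
    (fun t ht => (hd t ht).continuousAt.continuousWithinAt) hne
    (fun t ht => hd t (interior_subset ht)) (fun t ht => hneg t (interior_subset ht))⟩

/-- Strict log-concavity of the first radial Dirichlet eigenfunction of geodesic balls in
`ℍⁿ`: if `u` is twice continuously differentiable on `[0, r)`, continuous on `[0, r]`,
positive on `[0, r)`, with `u'(0) = 0`, `u(r) = 0`, and satisfies
`u'' + ((n−1)/tanh t)·u' + λ·u = 0` on `(0, r)` with `λ > 0`, then `φ = u'/u` satisfies
`φ' < 0` on `[0, r)`; in particular `log u` is strictly concave on `[0, r)`. -/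
theorem radial_eigenfunction_log_concave (n : ℕ) (hn : 2 ≤ n) (r lam : ℝ)
    (hr : 0 < r) (hlam : 0 < lam) (u : ℝ → ℝ)
    (hc : ContinuousOn u (Set.Icc 0 r))
    (hd : ∀ t ∈ Set.Ico (0:ℝ) r, DifferentiableAt ℝ u t)
    (hd' : ∀ t ∈ Set.Ico (0:ℝ) r, DifferentiableAt ℝ (deriv u) t)
    (hc'' : ContinuousOn (deriv (deriv u)) (Set.Ico 0 r))
    (hpos : ∀ t ∈ Set.Ico (0:ℝ) r, 0 < u t)
    (h0 : deriv u 0 = 0) (hrr : u r = 0)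
    (hode : ∀ t ∈ Set.Ioo (0:ℝ) r,
      deriv (deriv u) t + (((n : ℝ) - 1) / Real.tanh t) * deriv u t + lam * u t = 0) :
    (∀ t ∈ Set.Ico (0:ℝ) r, deriv (fun s => deriv u s / u s) t < 0) ∧
      StrictConcaveOn ℝ (Set.Ico 0 r) (fun t => Real.log (u t)) := by
  have hdim : (0 : ℝ) < n - 1 := sub_pos.2 (Nat.one_lt_cast.2 hn)
  exact radial_eigenfunction_log_concave_general hlam
    (fun t ht => deriv_const_div_tanh_neg hdim ht.1.ne')
    ((tendsto_id_mul_const_div_tanh _).mono_left (nhdsGT_le_nhdsNE 0)) hd hd' hpos h0 hode
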